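/- Let G be a finitely generated group acting by isometries on an ℝ-tree Γ. Suppose the action is minimal and irreducible, and the translation length of every element of G is an integer. Then Γ is a simplicial tree. -/

import Mathlib

open Set Filter Metric

section Common

variable {H : Type*} [MetricSpace H]

/-- `γ` parametrizes a geodesic from `a` to `b` by arclength on `[0, dist a b]`. -/
def IsGeodesicSegment (γ : ℝ → H) (a b : H) : Prop :=
  γ 0 = a ∧ γ (dist a b) = b ∧
    ∀ s ∈ Set.Icc (0:ℝ) (dist a b), ∀ t ∈ Set.Icc (0:ℝ) (dist a b),
      dist (γ s) (γ t) = |s - t|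

/-- A geodesic space: every pair of points is joined by a geodesic. -/
def GeodesicSpace (H : Type*) [MetricSpace H] : Prop :=
  ∀ a b : H, ∃ γ : ℝ → H, IsGeodesicSegment γ a b

/-- The image of a geodesic segment from `a` to `b`. -/
def segImage (γ : ℝ → H) (a b : H) : Set H :=
  γ '' Set.Icc 0 (dist a b)

/-- A space has `Δ`-thin triangles if each side of every geodesic triangle is contained
in the `Δ`-neighborhood of the union of the other two sides. -/
def ThinTriangles (H : Type*) [MetricSpace H] (Δ : ℝ) : Prop :=
  ∀ a b c : H, ∀ γab γbc γca : ℝ → H,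
    IsGeodesicSegment γab a b → IsGeodesicSegment γbc b c → IsGeodesicSegment γca c a →
      ∀ x ∈ segImage γab a b, ∃ y ∈ segImage γbc b c ∪ segImage γca c a, dist x y ≤ Δ

/-- An arc from `a` to `b`, parametrized (injectively and continuously) by `[0,1]`. -/
def IsArcParam (α : ℝ → H) (a b : H) : Prop :=
  ContinuousOn α (Set.Icc 0 1) ∧ Set.InjOn α (Set.Icc 0 1) ∧ α 0 = a ∧ α 1 = b

/-- An `ℝ`-tree: a metric space in which every pair of points is joined by a geodesic
(so it is a path-metric space and arcs are isometric to intervals of `ℝ`) and in which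
the arc joining two points is unique. -/
def IsRTree (X : Type*) [MetricSpace X] : Prop :=
  (∀ a b : X, ∃ γ : ℝ → X, IsGeodesicSegment γ a b) ∧
  ∀ a b : X, ∀ α β : ℝ → X, IsArcParam α a b → IsArcParam β a b →
    α '' Set.Icc 0 1 = β '' Set.Icc 0 1

/-- The translation length of an isometry. -/
noncomputable def translationLength {X : Type*} [MetricSpace X] (τ : X ≃ᵢ X) : ℝ :=
  ⨅ x : X, dist x (τ x)

/-- The core of an isometry of an `ℝ`-tree: points moved the minimal distance. -/
def isomCore {X : Type*} [MetricSpace X] (τ : X ≃ᵢ X) : Set X :=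
  {x : X | dist x (τ x) = translationLength τ}

/-- An elliptic isometry: one having a fixed point. -/
def IsElliptic {X : Type*} [MetricSpace X] (τ : X ≃ᵢ X) : Prop :=
  ∃ x, τ x = x

/-- A hyperbolic isometry of an `ℝ`-tree: positive translation length, with core
isometric to the real line (its axis). -/
def IsHyperbolicIsom {X : Type*} [MetricSpace X] (τ : X ≃ᵢ X) : Prop :=
  0 < translationLength τ ∧
    ∃ e : ℝ → X, (∀ s t : ℝ, dist (e s) (e t) = |s - t|) ∧ Set.range e = isomCore τ

/-- A metric simplicial tree: an `ℝ`-tree together with a closed discrete set `V` of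
vertices such that each connected component of the complement of `V` is an open edge:
it is the interior of a geodesic segment of positive length with endpoints in `V`. -/
def IsMetricSimplicialTree (X : Type*) [MetricSpace X] : Prop :=
  IsRTree X ∧
    ∃ V : Set X, IsClosed V ∧
      (∀ v ∈ V, ∃ ε > 0, ∀ w ∈ V, dist v w < ε → w = v) ∧
      ∀ x ∈ Vᶜ, ∃ L > (0:ℝ), ∃ f : ℝ → X,
        (∀ s ∈ Set.Icc (0:ℝ) L, ∀ t ∈ Set.Icc (0:ℝ) L, dist (f s) (f t) = |s - t|) ∧
        f '' Set.Ioo 0 L = connectedComponentIn Vᶜ x ∧ f 0 ∈ V ∧ f L ∈ V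

end Common

/-- Twice the Gromov product. -/
def gpr {X : Type*} [MetricSpace X] (p x y : X) : ℝ := dist p x + dist p y - dist x y

/-- Zero-hyperbolicity. -/
def Hyp0 (X : Type*) [MetricSpace X] : Prop :=
  ∀ p x y z : X, min (gpr p x y) (gpr p y z) ≤ gpr p x z

lemma gpr_nonneg {X : Type*} [MetricSpace X] (p x y : X) : 0 ≤ gpr p x y := by
  have := dist_triangle x p y
  rw [dist_comm x p] at this
  unfold gpr; linarith

lemma gpr_comm {X : Type*} [MetricSpace X] (p x y : X) : gpr p x y = gpr p y x := by
  unfold gpr; rw [dist_comm x y]; ring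

lemma geod_cont {X : Type*} [MetricSpace X] {γ : ℝ → X} {S : Set ℝ}
    (h : ∀ s ∈ S, ∀ t ∈ S, dist (γ s) (γ t) = |s - t|) : ContinuousOn γ S := by
  have : LipschitzOnWith 1 γ S := by
    apply LipschitzOnWith.of_dist_le_mul
    intro s hs t ht
    rw [h s hs t ht, Real.dist_eq]; simp
  exact this.continuousOn

lemma concat_mem {X : Type*} [MetricSpace X] (hX : IsRTree X) {a m b : X}
    {γ₁ γ₂ γ : ℝ → X} (h1 : IsGeodesicSegment γ₁ a m) (h2 : IsGeodesicSegment γ₂ m b)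
    (h : IsGeodesicSegment γ a b)
    (hmeet : ∀ s ∈ Set.Icc 0 (dist a m), ∀ t ∈ Set.Icc 0 (dist m b), γ₁ s = γ₂ t → γ₁ s = m) :
    ∃ s ∈ Set.Icc 0 (dist a b), γ s = m := by
  by_cases ham : a = m
  · exact ⟨0, ⟨le_rfl, dist_nonneg⟩, by rw [h.1, ham]⟩
  by_cases hmb : m = b
  · exact ⟨dist a b, ⟨dist_nonneg, le_rfl⟩, by rw [h.2.1, hmb]⟩
  have ham' : 0 < dist a m := dist_pos.2 ham
  have hmb' : 0 < dist m b := dist_pos.2 hmb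
  set A := dist a m with hA
  set D := dist m b with hD
  have inj1 : ∀ s ∈ Set.Icc 0 A, ∀ t ∈ Set.Icc 0 A, γ₁ s = γ₁ t → s = t := by
    intro s hs t ht e
    have := h1.2.2 s hs t ht
    rw [e, dist_self] at this
    exact sub_eq_zero.1 (abs_eq_zero.1 this.symm)
  have inj2 : ∀ s ∈ Set.Icc 0 D, ∀ t ∈ Set.Icc 0 D, γ₂ s = γ₂ t → s = t := by
    intro s hs t ht e
    have := h2.2.2 s hs t ht
    rw [e, dist_self] at this
    exact sub_eq_zero.1 (abs_eq_zero.1 this.symm)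
  have hab : a ≠ b := by
    rintro rfl
    have := hmeet 0 ⟨le_rfl, ham'.le⟩ D ⟨hmb'.le, le_rfl⟩ (by rw [h1.1, h2.2.1])
    rw [h1.1] at this
    exact ham this
  have hab' : 0 < dist a b := dist_pos.2 hab
  let c : ℝ → X := fun t => if t ≤ A then γ₁ t else γ₂ (t - A)
  have hc1 : ∀ t, t ≤ A → c t = γ₁ t := fun t ht => by simp [c, ht]
  have hc2 : ∀ t, A ≤ t → c t = γ₂ (t - A) := by
    intro t ht
    rcases ht.eq_or_lt with e | e
    · subst e
      rw [hc1 _ le_rfl, sub_self, h2.1, h1.2.1]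
    · simp [c, not_le.2 e]
  have hcc : ContinuousOn c (Set.Icc 0 (A + D)) := by
    have e : Set.Icc 0 (A + D) = Set.Icc 0 A ∪ Set.Icc A (A + D) := by
      rw [Set.Icc_union_Icc_eq_Icc ham'.le (by linarith)]
    rw [e]
    apply ContinuousOn.union_of_isClosed _ _ isClosed_Icc isClosed_Icc
    · exact (geod_cont h1.2.2).congr (fun t ht => hc1 t ht.2)
    · apply geod_cont
      intro s hs t ht
      rw [hc2 s hs.1, hc2 t ht.1, h2.2.2 _ ⟨by linarith [hs.1], by linarith [hs.2]⟩ _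
        ⟨by linarith [ht.1], by linarith [ht.2]⟩]
      congr 1; ring
  have key : ∀ s, 0 ≤ s → s ≤ A → ∀ t, A < t → t ≤ A + D → c s ≠ c t := by
    intro s hs0 hsA t htA htD e
    rw [hc1 s hsA, hc2 t htA.le] at e
    have ht : t - A ∈ Set.Icc 0 D := ⟨by linarith, by linarith⟩
    have := hmeet s ⟨hs0, hsA⟩ (t - A) ht e
    rw [e, ← h2.1] at this
    have := inj2 _ ht 0 ⟨le_rfl, hmb'.le⟩ this
    linarith
  have hci : Set.InjOn c (Set.Icc 0 (A + D)) := by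
    intro s hs t ht e
    rcases le_or_gt s A with hsA | hsA <;> rcases le_or_gt t A with htA | htA
    · rw [hc1 s hsA, hc1 t htA] at e
      exact inj1 s ⟨hs.1, hsA⟩ t ⟨ht.1, htA⟩ e
    · exact absurd e (key s hs.1 hsA t htA ht.2)
    · exact absurd e.symm (key t ht.1 htA s hsA hs.2)
    · rw [hc2 s hsA.le, hc2 t htA.le] at e
      have := inj2 _ ⟨by linarith, by linarith [hs.2]⟩ _ ⟨by linarith, by linarith [ht.2]⟩ e
      linarith
  have resc : ∀ (f : ℝ → X) (L : ℝ), 0 < L → ContinuousOn f (Set.Icc 0 L) →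
      Set.InjOn f (Set.Icc 0 L) → f 0 = a → f L = b →
      IsArcParam (fun t => f (t * L)) a b := by
    intro f L hL hf hi h0 h1
    have hm : Set.MapsTo (fun t : ℝ => t * L) (Set.Icc 0 1) (Set.Icc 0 L) := by
      intro t ht
      exact ⟨mul_nonneg ht.1 hL.le, by nlinarith [ht.2]⟩
    refine ⟨hf.comp (by fun_prop) hm, ?_, by simp [h0], by simp [h1]⟩
    intro s hs t ht e
    have := hi (hm hs) (hm ht) e
    exact mul_right_cancel₀ hL.ne' this
  have arc1 := resc c (A + D) (by linarith) hcc hci (by rw [hc1 0 ham'.le, h1.1])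
    (by rw [hc2 _ (by linarith), add_sub_cancel_left, h2.2.1])
  have arc2 := resc γ (dist a b) hab' (geod_cont h.2.2) (by
    intro s hs t ht e
    have := h.2.2 s hs t ht
    rw [e, dist_self] at this
    exact sub_eq_zero.1 (abs_eq_zero.1 this.symm)) h.1 h.2.1
  have heq := hX.2 a b _ _ arc1 arc2
  have hm : m ∈ (fun t => c (t * (A + D))) '' Set.Icc 0 1 := by
    refine ⟨A / (A + D), ⟨by positivity, ?_⟩, ?_⟩
    · rw [div_le_one (by linarith)]; linarith
    · have : A / (A + D) * (A + D) = A := by field_simp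
      simp only [this]
      rw [hc1 A le_rfl, h1.2.1]
  rw [heq] at hm
  obtain ⟨t, ht, e⟩ := hm
  exact ⟨t * dist a b, ⟨mul_nonneg ht.1 hab'.le, by nlinarith [ht.2]⟩, e⟩

lemma geod_dist {X : Type*} [MetricSpace X] {a b : X} {γ : ℝ → X}
    (h : IsGeodesicSegment γ a b) {s : ℝ} (hs : s ∈ Set.Icc 0 (dist a b)) :
    dist a (γ s) = s ∧ dist (γ s) b = dist a b - s := by
  have h0 := h.2.2 0 ⟨le_rfl, dist_nonneg⟩ s hs
  have h1 := h.2.2 s hs _ ⟨dist_nonneg, le_rfl⟩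
  rw [h.1] at h0
  rw [h.2.1] at h1
  rw [h0, h1]
  constructor
  · rw [zero_sub, abs_neg, abs_of_nonneg hs.1]
  · rw [abs_sub_comm, abs_of_nonneg (by linarith [hs.2])]

/-- A point in the metric interval lies on any geodesic. -/
lemma geod_unique {X : Type*} [MetricSpace X] (hX : IsRTree X) {a m b : X} {γ : ℝ → X}
    (h : IsGeodesicSegment γ a b) (hm : dist a m + dist m b = dist a b) : γ (dist a m) = m := by
  obtain ⟨γ₁, h1⟩ := hX.1 a m
  obtain ⟨γ₂, h2⟩ := hX.1 m b
  obtain ⟨s, hs, e⟩ := concat_mem hX h1 h2 h (by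
    intro s hs t ht e
    have d1 := geod_dist h1 hs
    have d2 := geod_dist h2 ht
    have := dist_triangle a (γ₁ s) b
    rw [d1.1, e, d2.2] at this
    have hs' : s = dist a m := by linarith [hs.2, ht.1]
    rw [hs', h1.2.1])
  have := (geod_dist h hs).1
  rw [e] at this
  rw [this, e]

lemma exists_median {X : Type*} [MetricSpace X] (hX : IsRTree X) (a b c : X) :
    ∃ m, dist a m + dist m b = dist a b ∧ dist b m + dist m c = dist b c ∧
      dist a m + dist m c = dist a c := by
  obtain ⟨γ, h⟩ := hX.1 b c
  have hcomp : IsCompact (γ '' Set.Icc 0 (dist b c)) :=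
    isCompact_Icc.image_of_continuousOn (geod_cont h.2.2)
  obtain ⟨m, ⟨s, hs, rfl⟩, hmin⟩ := hcomp.exists_isMinOn
    ⟨γ 0, 0, ⟨le_rfl, dist_nonneg⟩, rfl⟩ (f := fun x => dist a x) (by fun_prop)
  have ds := geod_dist h hs
  set m := γ s with hm
  have hmbc : dist b m + dist m c = dist b c := by linarith
  have main : ∀ d, (∀ x, dist m x + dist x d = dist m d → dist a m ≤ dist a x) →
      dist a m + dist m d = dist a d := by
    intro d hd
    obtain ⟨γ₀, h0⟩ := hX.1 a d
    obtain ⟨γ₁, h1⟩ := hX.1 a m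
    obtain ⟨γ₂, h2⟩ := hX.1 m d
    obtain ⟨t, ht, e⟩ := concat_mem hX h1 h2 h0 (by
      intro s hs t ht e
      have d1 := geod_dist h1 hs
      have d2 := geod_dist h2 ht
      have := hd (γ₂ t) (by linarith)
      rw [← e] at this
      have hs' : s = dist a m := by linarith [hs.2]
      rw [hs', h1.2.1])
    have := geod_dist h0 ht
    rw [e] at this
    linarith
  have hd : ∀ x, dist b x + dist x c = dist b c → dist a m ≤ dist a x := by
    intro x hx
    have := geod_unique hX h hx
    exact hmin ⟨dist b x, ⟨dist_nonneg, by linarith [dist_nonneg (x := x) (y := c)]⟩, this⟩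
  refine ⟨m, main b ?_, hmbc, main c ?_⟩
  · intro x hx
    apply hd
    have := dist_triangle b x c
    have := dist_triangle x m c
    rw [dist_comm m x, dist_comm m b, dist_comm x b] at hx
    linarith
  · intro x hx
    apply hd
    have := dist_triangle b x c
    have := dist_triangle b m x
    linarith

lemma hyp0_of_tree {X : Type*} [MetricSpace X] (hX : IsRTree X) : Hyp0 X := by
  intro p x y z
  obtain ⟨m, a1, a2, a3⟩ := exists_median hX p x y
  obtain ⟨n, b1, b2, b3⟩ := exists_median hX p y z
  obtain ⟨γ, h⟩ := hX.1 p y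
  have e1 := geod_unique hX h a3
  have e2 := geod_unique hX h b1
  have d := h.2.2 (dist p m) ⟨dist_nonneg, by linarith [dist_nonneg (x := m) (y := y)]⟩
    (dist p n) ⟨dist_nonneg, by linarith [dist_nonneg (x := n) (y := y)]⟩
  rw [e1, e2] at d
  have t1 := dist_triangle x m z
  have t2 := dist_triangle m n z
  rw [dist_comm x m] at t1 a2
  rw [dist_comm y n] at b2
  unfold gpr
  rcases le_total (dist p m) (dist p n) with hle | hle
  · rw [abs_sub_comm, abs_of_nonneg (by linarith)] at d
    apply (min_le_left _ _).trans
    linarith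
  · rw [abs_of_nonneg (by linarith)] at d
    apply (min_le_right _ _).trans
    linarith

lemma gpr_zero_trans {X : Type*} [MetricSpace X] (h : Hyp0 X) {p x y z : X}
    (hxz : gpr p x z = 0) (hxy : 0 < gpr p x y) : gpr p y z = 0 := by
  have h1 := h p x y z
  have h2 := gpr_nonneg p y z
  rw [hxz] at h1
  rcases min_le_iff.1 h1 with h3 | h3 <;> linarith

lemma gpr_pos_trans {X : Type*} [MetricSpace X] (h : Hyp0 X) {p x y z : X}
    (hxy : 0 < gpr p x y) (hyz : 0 < gpr p y z) : 0 < gpr p x z :=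
  lt_of_lt_of_le (lt_min hxy hyz) (h p x y z)

/-- local geodesics are geodesics -/
lemma gpr_chain {X : Type*} [MetricSpace X] (h : Hyp0 X) {x y z w : X} (hyz : y ≠ z)
    (h1 : gpr y x z = 0) (h2 : gpr z y w = 0) : gpr z x w = 0 := by
  apply gpr_zero_trans h h2
  unfold gpr at *
  have := dist_pos.2 hyz
  rw [dist_comm z y, dist_comm z x, dist_comm y x] at *
  linarith

lemma gpr_smul {X : Type*} [MetricSpace X] (τ : X ≃ᵢ X) (p x y : X) :
    gpr (τ p) (τ x) (τ y) = gpr p x y := by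
  simp [gpr, τ.isometry.dist_eq]

lemma pow_dist {X : Type*} [MetricSpace X] (h : Hyp0 X) (τ : X ≃ᵢ X) (p : X)
    (hp : τ p ≠ p) (hB : gpr (τ p) p (τ (τ p)) = 0) (n : ℕ) :
    dist p ((τ ^ n) p) = n * dist p (τ p) := by
  have hs : ∀ n : ℕ, ∀ x, (τ ^ (n + 1)) x = (τ ^ n) (τ x) := by
    intro n x; rw [pow_succ]; rfl
  have step : ∀ n : ℕ, gpr ((τ ^ n) p) p ((τ ^ (n + 1)) p) = 0 := by
    intro n
    induction n with
    | zero => simp [gpr]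
    | succ n ih =>
      apply gpr_chain h (y := (τ ^ n) p) _ ih
      · rw [hs (n + 1) p, hs n (τ p), hs n p, gpr_smul]
        exact hB
      · rw [hs n p]
        intro e
        exact hp ((τ ^ n).injective e).symm
  induction n with
  | zero => simp
  | succ n ih =>
    have h1 := step n
    have h2 : dist ((τ ^ n) p) ((τ ^ (n + 1)) p) = dist p (τ p) := by
      rw [hs n p, (τ ^ n).isometry.dist_eq]
    unfold gpr at h1
    rw [h2, dist_comm _ p, ih] at h1
    push_cast
    linarith

lemma tl_eq {X : Type*} [MetricSpace X] (h : Hyp0 X) (τ : X ≃ᵢ X) (p : X)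
    (hp : τ p ≠ p) (hB : gpr (τ p) p (τ (τ p)) = 0) :
    translationLength τ = dist p (τ p) := by
  have : Nonempty X := ⟨p⟩
  apply le_antisymm
  · exact ciInf_le ⟨0, by rintro _ ⟨x, rfl⟩; exact dist_nonneg⟩ p
  · apply le_ciInf
    intro x
    have hx : ∀ n : ℕ, dist x ((τ ^ n) x) ≤ n * dist x (τ x) := by
      intro n
      induction n with
      | zero => simp
      | succ n ih =>
        have h1 := dist_triangle x ((τ ^ n) x) ((τ ^ (n + 1)) x)
        have h2 : dist ((τ ^ n) x) ((τ ^ (n + 1)) x) = dist x (τ x) := by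
          have : (τ ^ (n + 1)) x = (τ ^ n) (τ x) := by rw [pow_succ]; rfl
          rw [this, (τ ^ n).isometry.dist_eq]
        push_cast
        linarith
    by_contra hlt
    push Not at hlt
    obtain ⟨n, hn⟩ := exists_nat_gt ((2 * dist x p) / (dist p (τ p) - dist x (τ x)))
    rw [div_lt_iff₀ (by linarith)] at hn
    have h1 := pow_dist h τ p hp hB n
    have h2 := hx n
    have h3 := dist_triangle4 p x ((τ ^ n) x) ((τ ^ n) p)
    rw [(τ ^ n).isometry.dist_eq, dist_comm p x] at h3
    nlinarith

section Act
variable {G : Type*} [Group G] {X : Type*} [MetricSpace X]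

lemma act_mul_apply (σ : G →* (X ≃ᵢ X)) (g h : G) (x : X) : σ (g * h) x = σ g (σ h x) := by
  rw [map_mul]; rfl

lemma smul_inv_self (σ : G →* (X ≃ᵢ X)) (g : G) (x : X) : σ g⁻¹ (σ g x) = x := by
  rw [← act_mul_apply, inv_mul_cancel, map_one]; rfl

lemma smul_self_inv (σ : G →* (X ≃ᵢ X)) (g : G) (x : X) : σ g (σ g⁻¹ x) = x := by
  rw [← act_mul_apply, mul_inv_cancel, map_one]; rfl

lemma seg_preconn (hX : IsRTree X) (a b : X) :
    IsPreconnected {x | dist a x + dist x b = dist a b} := by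
  obtain ⟨γ, h⟩ := hX.1 a b
  have : {x | dist a x + dist x b = dist a b} = γ '' Set.Icc 0 (dist a b) := by
    ext x
    constructor
    · intro hx
      exact ⟨dist a x, ⟨dist_nonneg, by
        have : dist a x + dist x b = dist a b := hx
        linarith [dist_nonneg (x := x) (y := b)]⟩, geod_unique hX h hx⟩
    · rintro ⟨s, hs, rfl⟩
      have := geod_dist h hs
      show dist a (γ s) + dist (γ s) b = dist a b
      linarith
  rw [this]
  exact isPreconnected_Icc.image _ (geod_cont h.2.2)

lemma exists_hull (hX : IsRTree X) (σ : G →* (X ≃ᵢ X))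
    (hmin : ∀ S : Set X, IsConnected S → (∀ g : G, σ g '' S = S) → S = Set.univ)
    (x₀ x : X) : ∃ g h : G,
      dist (σ g x₀) x + dist x (σ h x₀) = dist (σ g x₀) (σ h x₀) := by
  let S : Set X := {x | ∃ g h : G,
      dist (σ g x₀) x + dist x (σ h x₀) = dist (σ g x₀) (σ h x₀)}
  have one : σ (1 : G) x₀ = x₀ := by rw [map_one]; rfl
  have hS : S = Set.univ := by
    apply hmin
    · refine ⟨⟨x₀, 1, 1, by simp⟩, ?_⟩
      apply isPreconnected_of_forall x₀
      rintro y ⟨g, h, hy⟩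
      refine ⟨{x | dist x₀ x + dist x (σ g x₀) = dist x₀ (σ g x₀)} ∪
        {x | dist (σ g x₀) x + dist x (σ h x₀) = dist (σ g x₀) (σ h x₀)}, ?_, ?_, ?_, ?_⟩
      · rintro z (hz | hz)
        · exact ⟨1, g, by rw [one]; exact hz⟩
        · exact ⟨g, h, hz⟩
      · left; simp
      · right; exact hy
      · apply IsPreconnected.union (σ g x₀) _ _ (seg_preconn hX _ _) (seg_preconn hX _ _)
        · simp
        · simp
    · have sub : ∀ g : G, σ g '' S ⊆ S := by
        rintro k _ ⟨z, ⟨g, h, hz⟩, rfl⟩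
        refine ⟨k * g, k * h, ?_⟩
        rw [act_mul_apply, act_mul_apply, (σ k).isometry.dist_eq, (σ k).isometry.dist_eq,
          (σ k).isometry.dist_eq]
        exact hz
      intro g
      apply (sub g).antisymm
      intro z hz
      exact ⟨σ g⁻¹ z, sub g⁻¹ ⟨z, hz, rfl⟩, smul_self_inv σ g z⟩
  have : x ∈ S := by rw [hS]; trivial
  exact this

lemma dir_orbit (hX : IsRTree X) (σ : G →* (X ≃ᵢ X))
    (hmin : ∀ S : Set X, IsConnected S → (∀ g : G, σ g '' S = S) → S = Set.univ)
    (x₀ p u : X) (hu : u ≠ p) : ∃ g : G, 0 < gpr p (σ g x₀) u := by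
  obtain ⟨g, h, e⟩ := exists_hull hX σ hmin x₀ u
  by_contra hcon
  push Not at hcon
  have h1 := hcon g
  have h2 := hcon h
  unfold gpr at h1 h2
  have h3 := dist_triangle (σ g x₀) p (σ h x₀)
  rw [dist_comm (σ g x₀) p] at h3
  rw [dist_comm u] at e
  have := dist_pos.2 hu
  rw [dist_comm u] at this
  linarith

lemma core_dir (τ : X ≃ᵢ X) (q x : X) (hx : x ∈ isomCore τ) (hq : q ∉ isomCore τ) :
    0 < gpr q (τ q) x ∧ 0 < gpr q (τ.symm q) x := by
  have hx' : dist x (τ x) = translationLength τ := hx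
  have hq' : translationLength τ < dist q (τ q) := by
    apply lt_of_le_of_ne
    · exact ciInf_le ⟨0, by rintro _ ⟨x, rfl⟩; exact dist_nonneg⟩ q
    · intro e; exact hq e.symm
  constructor
  · have h1 := dist_triangle (τ q) (τ x) x
    rw [τ.isometry.dist_eq, dist_comm (τ x) x] at h1
    unfold gpr; linarith
  · have h1 := dist_triangle (τ.symm q) (τ.symm x) x
    have h2 : dist (τ.symm x) x = dist x (τ x) := by
      rw [← τ.isometry.dist_eq]; simp
    have h3 : dist q (τ.symm q) = dist q (τ q) := by
      rw [← τ.isometry.dist_eq]; simp [dist_comm]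
    rw [τ.symm.isometry.dist_eq, h2] at h1
    unfold gpr; linarith

lemma lemma_D (hX : IsRTree X) (σ : G →* (X ≃ᵢ X))
    (hmin : ∀ S : Set X, IsConnected S → (∀ g : G, σ g '' S = S) → S = Set.univ)
    (hirr : ∃ a b : G, IsHyperbolicIsom (σ a) ∧ IsHyperbolicIsom (σ b) ∧
      Disjoint (isomCore (σ a)) (isomCore (σ b)))
    (p u : X) (hu : u ≠ p) : ∃ k : G, 0 < gpr p (σ k p) u ∧ 0 < gpr p (σ k⁻¹ p) u := by
  have H := hyp0_of_tree hX
  obtain ⟨g, hg⟩ := dir_orbit hX σ hmin p p u hu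
  by_cases hg' : 0 < gpr p (σ g⁻¹ p) (σ g p)
  · exact ⟨g, hg, gpr_pos_trans H hg' hg⟩
  have hB : gpr p (σ g⁻¹ p) (σ g p) = 0 := le_antisymm (not_lt.1 hg') (gpr_nonneg _ _ _)
  have hgp : σ g p ≠ p := by
    intro e
    rw [e] at hg
    simp [gpr] at hg
  have hB1 : gpr (σ g p) p (σ g (σ g p)) = 0 := by
    rw [← gpr_smul (σ g), smul_self_inv] at hB; exact hB
  have hL := dist_pos.2 hgp.symm
  obtain ⟨a, b, ⟨-, ea, -, hea⟩, ⟨-, eb, -, heb⟩, hdis⟩ := hirr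
  have hxa : ea 0 ∈ isomCore (σ a) := hea ▸ Set.mem_range_self 0
  have hxb : eb 0 ∈ isomCore (σ b) := heb ▸ Set.mem_range_self 0
  obtain ⟨n, hn⟩ := exists_nat_gt (max (dist p (ea 0)) (dist p (eb 0)) / dist p (σ g p))
  rw [div_lt_iff₀ hL] at hn
  have hn1 := lt_of_le_of_lt (le_max_left _ _) hn
  have hn2 := lt_of_le_of_lt (le_max_right _ _) hn
  have hpw : ∀ (m : ℕ), dist p (σ (g ^ m) p) = m * dist p (σ g p) := by
    intro m; rw [map_pow]; exact pow_dist H (σ g) p hgp hB1 m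
  set q := σ (g ^ n)⁻¹ p with hq
  have hgq : σ (g ^ n) q = p := smul_self_inv σ _ _
  have hqp : dist q p = n * dist p (σ g p) := by
    rw [← hpw n]
    conv_lhs => rw [← (σ (g ^ n)).isometry.dist_eq, hgq]
  have hfwd : 0 < gpr p (σ (g ^ n) p) (σ g p) := by
    rcases n with _ | m
    · simp at hn1
      exact absurd hn1 (not_lt.2 dist_nonneg)
    · have : dist (σ (g ^ (m + 1)) p) (σ g p) = m * dist p (σ g p) := by
        rw [pow_succ', act_mul_apply, (σ g).isometry.dist_eq, dist_comm, hpw]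
      unfold gpr
      rw [this, hpw]
      push_cast
      linarith
  have fin : ∀ (c : G) (x : X), x ∈ isomCore (σ c) → q ∉ isomCore (σ c) →
      dist p x < n * dist p (σ g p) →
      ∃ k : G, 0 < gpr p (σ k p) u ∧ 0 < gpr p (σ k⁻¹ p) u := by
    intro c x hx hqc hlt
    obtain ⟨c1, c2⟩ := core_dir (σ c) q x hx hqc
    have hsymm : (σ c).symm q = σ c⁻¹ q := by rw [map_inv]; rfl
    rw [hsymm] at c2
    have hxp : 0 < gpr q x p := by
      have := dist_triangle q x p
      unfold gpr
      rw [dist_comm x p] at *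
      have h3 := dist_triangle q p x
      have h4 := dist_triangle p x q
      rw [dist_comm x q, dist_comm p q] at h4
      linarith
    have tr : ∀ y, 0 < gpr q y x → 0 < gpr p (σ (g ^ n) y) u := by
      intro y hy
      have := gpr_pos_trans H hy hxp
      rw [← gpr_smul (σ (g ^ n)), hgq] at this
      exact gpr_pos_trans H (gpr_pos_trans H this hfwd) hg
    refine ⟨g ^ n * c * (g ^ n)⁻¹, ?_, ?_⟩
    · rw [act_mul_apply, act_mul_apply]
      exact tr _ c1
    · have : (g ^ n * c * (g ^ n)⁻¹)⁻¹ = g ^ n * c⁻¹ * (g ^ n)⁻¹ := by group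
      rw [this, act_mul_apply, act_mul_apply]
      exact tr _ c2
  by_cases hqa : q ∈ isomCore (σ a)
  · exact fin b _ hxb (fun hqb => Set.disjoint_left.1 hdis hqa hqb) hn2
  · exact fin a _ hxa hqa hn1

lemma lemma_E (hX : IsRTree X) (σ : G →* (X ≃ᵢ X))
    (hmin : ∀ S : Set X, IsConnected S → (∀ g : G, σ g '' S = S) → S = Set.univ)
    (hirr : ∃ a b : G, IsHyperbolicIsom (σ a) ∧ IsHyperbolicIsom (σ b) ∧
      Disjoint (isomCore (σ a)) (isomCore (σ b)))
    (p u v : X) (hu : u ≠ p) (hv : v ≠ p) (huv : gpr p u v = 0) :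
    ∃ g : G, 0 < gpr p (σ g⁻¹ p) u ∧ 0 < gpr p (σ g p) v := by
  have H := hyp0_of_tree hX
  obtain ⟨k, k1, k2⟩ := lemma_D hX σ hmin hirr p u hu
  obtain ⟨l, l1, l2⟩ := lemma_D hX σ hmin hirr p v hv
  have aux : ∀ (k l : G) (u v : X), v ≠ p → gpr p u v = 0 → 0 < gpr p (σ k⁻¹ p) u →
      0 < gpr p (σ l p) v → 0 < gpr p (σ l⁻¹ p) v → 0 < gpr p (σ (l * k⁻¹) p) v := by
    intro k l u v hv huv k2 l1 l2
    have h1 : gpr p (σ k⁻¹ p) v = 0 :=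
      gpr_zero_trans H huv (by rw [gpr_comm]; exact k2)
    have h2 : gpr p (σ l⁻¹ p) (σ k⁻¹ p) = 0 :=
      gpr_zero_trans H (x := v) (by rw [gpr_comm]; exact h1) (by rw [gpr_comm]; exact l2)
    rw [← gpr_smul (σ l), smul_self_inv, ← act_mul_apply] at h2
    apply gpr_pos_trans H _ l1
    have hne : p ≠ σ l p := by
      intro e
      rw [← e] at l1
      simp [gpr] at l1
    have := dist_pos.2 hne
    unfold gpr at *
    rw [dist_comm (σ l p) p, dist_comm (σ l p) (σ (l * k⁻¹) p)] at h2
    linarith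
  refine ⟨l * k⁻¹, ?_, aux k l u v hv huv k2 l1 l2⟩
  have : (l * k⁻¹)⁻¹ = k * l⁻¹ := by group
  rw [this]
  exact aux l k v u hu (by rw [gpr_comm]; exact huv) l2 k1 k2

/-- Branch points. -/
def IsBranch (p : X) : Prop :=
  ∃ u v w : X, u ≠ p ∧ v ≠ p ∧ w ≠ p ∧ gpr p u v = 0 ∧ gpr p v w = 0 ∧ gpr p u w = 0

lemma IsBranch.smul {p : X} (h : IsBranch p) (τ : X ≃ᵢ X) : IsBranch (τ p) := by
  obtain ⟨u, v, w, hu, hv, hw, h1, h2, h3⟩ := h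
  exact ⟨τ u, τ v, τ w, τ.injective.ne hu, τ.injective.ne hv, τ.injective.ne hw,
    by rw [gpr_smul, h1], by rw [gpr_smul, h2], by rw [gpr_smul, h3]⟩

/-- Two directions at a branch point, both avoiding `q`. -/
lemma IsBranch.two {p q : X} (H : Hyp0 X) (h : IsBranch p) :
    ∃ u v : X, u ≠ p ∧ v ≠ p ∧ gpr p u v = 0 ∧ gpr p u q = 0 ∧ gpr p v q = 0 := by
  obtain ⟨u, v, w, hu, hv, hw, h1, h2, h3⟩ := h
  have z : ∀ x, ¬ 0 < gpr p x q → gpr p x q = 0 := fun x hx =>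
    le_antisymm (not_lt.1 hx) (gpr_nonneg _ _ _)
  by_cases c1 : 0 < gpr p u q
  · refine ⟨v, w, hv, hw, h2, ?_, ?_⟩
    · rw [gpr_comm]; exact gpr_zero_trans H h1 c1
    · rw [gpr_comm]; exact gpr_zero_trans H h3 c1
  by_cases c2 : 0 < gpr p v q
  · refine ⟨u, w, hu, hw, h3, z _ c1, ?_⟩
    rw [gpr_comm]; exact gpr_zero_trans H h2 c2
  exact ⟨u, v, hu, hv, h1, z _ c1, z _ c2⟩

lemma branch_dist (hX : IsRTree X) (σ : G →* (X ≃ᵢ X))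
    (hmin : ∀ S : Set X, IsConnected S → (∀ g : G, σ g '' S = S) → S = Set.univ)
    (hirr : ∃ a b : G, IsHyperbolicIsom (σ a) ∧ IsHyperbolicIsom (σ b) ∧
      Disjoint (isomCore (σ a)) (isomCore (σ b)))
    (hint : ∀ g : G, ∃ k : ℤ, translationLength (σ g) = (k : ℝ))
    (p q : X) (hp : IsBranch p) (hq : IsBranch q) (hpq : p ≠ q) : 1 / 2 ≤ dist p q := by
  have H := hyp0_of_tree hX
  have ax : ∀ p q : X, IsBranch p → ∃ g : G, σ g p ≠ p ∧ gpr p (σ g⁻¹ p) q = 0 ∧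
      gpr p (σ g p) q = 0 ∧ gpr (σ g p) p (σ g (σ g p)) = 0 := by
    intro p q hp
    obtain ⟨u, v, hu, hv, huv, huq, hvq⟩ := hp.two (q := q) H
    obtain ⟨g, g1, g2⟩ := lemma_E hX σ hmin hirr p u v hu hv huv
    refine ⟨g, ?_, gpr_zero_trans H huq (by rw [gpr_comm]; exact g1),
      gpr_zero_trans H hvq (by rw [gpr_comm]; exact g2), ?_⟩
    · intro e
      rw [e] at g2
      simp [gpr] at g2
    · have h1 : gpr p (σ g⁻¹ p) v = 0 := gpr_zero_trans H huv (by rw [gpr_comm]; exact g1)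
      have h2 : gpr p (σ g p) (σ g⁻¹ p) = 0 :=
        gpr_zero_trans H (x := v) (by rw [gpr_comm]; exact h1) (by rw [gpr_comm]; exact g2)
      rw [gpr_comm, ← gpr_smul (σ g), smul_self_inv] at h2
      exact h2
  obtain ⟨g, gp, g1, g2, g3⟩ := ax p q hp
  obtain ⟨h, hq', h1, h2, h3⟩ := ax q p hq
  have tg := tl_eq H (σ g) p gp g3
  have th := tl_eq H (σ h) q hq' h3
  have B1 : gpr (σ g p) p (σ g q) = 0 := by
    rw [← gpr_smul (σ g), smul_self_inv] at g1; exact g1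
  have B2 : gpr (σ g q) (σ g p) (σ g (σ h q)) = 0 := by
    rw [gpr_smul, gpr_comm]; exact h2
  have B3 : gpr (σ g (σ h q)) (σ g q) (σ g (σ h p)) = 0 := by
    rw [gpr_smul]
    rw [← gpr_smul (σ h), smul_self_inv] at h1; exact h1
  have B4 : gpr (σ g (σ h p)) (σ g (σ h q)) (σ g (σ h (σ g p))) = 0 := by
    rw [gpr_smul, gpr_smul, gpr_comm]; exact g2
  have C2 := gpr_chain H ((σ g).injective.ne hpq) B1 B2
  have C3 := gpr_chain H ((σ g).injective.ne hq'.symm) C2 B3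
  have C4 := gpr_chain H ((σ g).injective.ne ((σ h).injective.ne hpq.symm)) C3 B4
  have e1 : dist (σ g p) (σ g q) = dist p q := (σ g).isometry.dist_eq _ _
  have e2 : dist (σ g q) (σ g (σ h q)) = dist q (σ h q) := (σ g).isometry.dist_eq _ _
  have e3 : dist (σ g (σ h q)) (σ g (σ h p)) = dist p q := by
    rw [(σ g).isometry.dist_eq, (σ h).isometry.dist_eq, dist_comm]
  have dtot : dist p (σ g (σ h p)) = dist p (σ g p) + dist q (σ h q) + 2 * dist p q := by
    unfold gpr at B1 C2 C3
    rw [dist_comm _ p] at B1 C2 C3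
    linarith
  have B5 : gpr (σ g p) p (σ g (σ h p)) = 0 := by
    have t1 := dist_triangle4 (σ g p) (σ g q) (σ g (σ h q)) (σ g (σ h p))
    apply le_antisymm _ (gpr_nonneg _ _ _)
    unfold gpr
    rw [dist_comm _ p]
    linarith
  have B6 : gpr (σ g (σ h (σ g p))) (σ g (σ h p)) (σ g (σ h (σ g (σ h p)))) = 0 := by
    rw [gpr_smul, gpr_smul]; exact B5
  have C5 : gpr (σ g (σ h p)) p (σ g (σ h (σ g (σ h p)))) = 0 := by
    have := gpr_chain H ((σ g).injective.ne ((σ h).injective.ne gp.symm)) C4 B6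
    have t := dist_triangle (σ g (σ h p)) (σ g (σ h (σ g p))) (σ g (σ h (σ g (σ h p))))
    apply le_antisymm _ (gpr_nonneg _ _ _)
    unfold gpr at *
    rw [dist_comm _ p] at *
    rw [dist_comm (σ g (σ h (σ g p))) (σ g (σ h p))] at *
    linarith
  have hpos := dist_pos.2 hpq
  have tk := tl_eq H (σ (g * h)) p (by
    rw [act_mul_apply]
    intro e
    rw [e, dist_self] at dtot
    linarith [dist_nonneg (x := p) (y := σ g p), dist_nonneg (x := q) (y := σ h q)]) (by
    rw [act_mul_apply, act_mul_apply]; exact C5)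
  rw [act_mul_apply, dtot] at tk
  obtain ⟨i, hi⟩ := hint g
  obtain ⟨j, hj⟩ := hint h
  obtain ⟨k, hk⟩ := hint (g * h)
  have hk' : ((k - i - j : ℤ) : ℝ) = 2 * dist p q := by
    push_cast
    linarith
  have : (0 : ℝ) < ((k - i - j : ℤ) : ℝ) := by rw [hk']; linarith
  have : (1 : ℤ) ≤ k - i - j := by
    have := Int.cast_pos.1 this
    omega
  have : (1 : ℝ) ≤ ((k - i - j : ℤ) : ℝ) := by exact_mod_cast this
  linarith

lemma exists_branch (hX : IsRTree X) (σ : G →* (X ≃ᵢ X))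
    (hirr : ∃ a b : G, IsHyperbolicIsom (σ a) ∧ IsHyperbolicIsom (σ b) ∧
      Disjoint (isomCore (σ a)) (isomCore (σ b))) : ∃ p : X, IsBranch p := by
  obtain ⟨a, b, ⟨-, e, he, hea⟩, ⟨-, eb, -, heb⟩, hdis⟩ := hirr
  have hxb : eb 0 ∈ isomCore (σ b) := heb ▸ Set.mem_range_self 0
  set x := eb 0
  have hxa : x ∉ Set.range e := by
    rw [hea]; intro h; exact Set.disjoint_left.1 hdis h hxb
  set t := dist x (e 0) + 1 with ht
  have htp : 0 < t := by positivity
  obtain ⟨m, m1, m2, m3⟩ := exists_median hX x (e (-t)) (e t)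
  have d0 : dist (e (-t)) (e t) = 2 * t := by
    rw [he, abs_sub_comm, abs_of_nonneg (by linarith)]; ring
  have d1 : dist (e 0) (e (-t)) = t := by
    rw [he, abs_of_nonneg (by linarith)]; ring
  have d2 : dist (e 0) (e t) = t := by
    rw [he, abs_sub_comm, abs_of_nonneg (by linarith)]; ring
  have t1 := dist_triangle x (e 0) (e (-t))
  have t2 := dist_triangle x (e 0) (e t)
  have n1 : x ≠ m := by
    intro h
    apply hxa
    rw [← h] at m2
    have hg : IsGeodesicSegment (fun s => e (s - t)) (e (-t)) (e t) := by
      refine ⟨by simp, ?_, ?_⟩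
      · simp only [d0]; congr 1; ring
      · intro s _ r _
        rw [he]; congr 1; ring
    exact ⟨dist (e (-t)) x - t, geod_unique hX hg m2⟩
  have n2 : e (-t) ≠ m := by
    intro h
    rw [← h] at m3
    linarith [dist_nonneg (x := x) (y := e (-t))]
  have n3 : e t ≠ m := by
    intro h
    rw [← h, dist_comm (e t)] at m1
    linarith [dist_nonneg (x := x) (y := e t)]
  refine ⟨m, x, e (-t), e t, n1, n2, n3, ?_, ?_, ?_⟩ <;> unfold gpr
  · rw [dist_comm m x]; linarith
  · rw [dist_comm m (e (-t))]; linarith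
  · rw [dist_comm m x]; linarith

lemma two_dirs (hX : IsRTree X) (σ : G →* (X ≃ᵢ X))
    (hmin : ∀ S : Set X, IsConnected S → (∀ g : G, σ g '' S = S) → S = Set.univ)
    (b : X) (hb : IsBranch b) (x : X) : ∃ u v : X, u ≠ x ∧ v ≠ x ∧ gpr x u v = 0 := by
  obtain ⟨g, h, e⟩ := exists_hull hX σ hmin b x
  have tb : ∀ y : X, IsBranch y → ∃ u v : X, u ≠ y ∧ v ≠ y ∧ gpr y u v = 0 := by
    rintro y ⟨u, v, w, hu, hv, hw, h1, h2, h3⟩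
    exact ⟨u, v, hu, hv, h1⟩
  by_cases c1 : σ g b = x
  · exact tb x (c1 ▸ hb.smul (σ g))
  by_cases c2 : σ h b = x
  · exact tb x (c2 ▸ hb.smul (σ h))
  refine ⟨_, _, c1, c2, ?_⟩
  unfold gpr
  rw [dist_comm x]; linarith

lemma final_edge (hX : IsRTree X) (V : Set X) (hVc : IsClosed V)
    (hV : ∀ p : X, IsBranch p → p ∈ V) (x p q : X) (hx : x ∉ V) (hp : p ∈ V) (hq : q ∈ V)
    (hB : dist p x + dist x q = dist p q) :
    ∃ L > (0:ℝ), ∃ f : ℝ → X,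
        (∀ s ∈ Set.Icc (0:ℝ) L, ∀ t ∈ Set.Icc (0:ℝ) L, dist (f s) (f t) = |s - t|) ∧
        f '' Set.Ioo 0 L = connectedComponentIn Vᶜ x ∧ f 0 ∈ V ∧ f L ∈ V := by
  obtain ⟨γ, h⟩ := hX.1 p q
  have hxs := geod_unique hX h hB
  set s := dist p x with hs
  have hs0 : 0 ≤ s := dist_nonneg
  have hsd : s ≤ dist p q := by linarith [dist_nonneg (x := x) (y := q)]
  have cont := geod_cont h.2.2
  have k1 : IsCompact (Set.Icc 0 s ∩ γ ⁻¹' V) := by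
    apply isCompact_Icc.of_isClosed_subset _ Set.inter_subset_left
    exact (cont.mono (Set.Icc_subset_Icc le_rfl hsd)).preimage_isClosed_of_isClosed
      isClosed_Icc hVc
  have k2 : IsCompact (Set.Icc s (dist p q) ∩ γ ⁻¹' V) := by
    apply isCompact_Icc.of_isClosed_subset _ Set.inter_subset_left
    exact (cont.mono (Set.Icc_subset_Icc hs0 le_rfl)).preimage_isClosed_of_isClosed
      isClosed_Icc hVc
  obtain ⟨a, ⟨⟨ha0, has⟩, haV⟩, hamax⟩ := k1.exists_isGreatest
    ⟨0, ⟨le_rfl, hs0⟩, by rw [Set.mem_preimage, h.1]; exact hp⟩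
  obtain ⟨b, ⟨⟨hbs, hbd⟩, hbV⟩, hbmin⟩ := k2.exists_isLeast
    ⟨dist p q, ⟨hsd, le_rfl⟩, by rw [Set.mem_preimage, h.2.1]; exact hq⟩
  have has' : a < s := lt_of_le_of_ne has (by
    rintro rfl; rw [Set.mem_preimage, hxs] at haV; exact hx haV)
  have hbs' : s < b := lt_of_le_of_ne hbs (by
    rintro e; rw [Set.mem_preimage, ← e, hxs] at hbV; exact hx hbV)
  have hout : ∀ r, a < r → r < b → γ r ∉ V := by
    intro r h1 h2 h3
    rcases le_total r s with h4 | h4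
    · exact absurd (hamax ⟨⟨by linarith, h4⟩, h3⟩) (not_le.2 h1)
    · exact absurd (hbmin ⟨⟨h4, by linarith⟩, h3⟩) (not_le.2 h2)
  set L := b - a with hL
  have hLp : 0 < L := by linarith
  let f : ℝ → X := fun r => γ (a + r)
  have hf : ∀ s ∈ Set.Icc (0:ℝ) L, ∀ t ∈ Set.Icc (0:ℝ) L, dist (f s) (f t) = |s - t| := by
    intro r hr t ht
    have := h.2.2 (a + r) ⟨by linarith [hr.1], by linarith [hr.2]⟩ (a + t)
      ⟨by linarith [ht.1], by linarith [ht.2]⟩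
    simp only [f]
    rw [this]; congr 1; ring
  have f0V : f 0 ∈ V := by simp only [f, add_zero]; exact haV
  have fLV : f L ∈ V := by
    have : f L = γ b := by simp only [f, hL]; congr 1; ring
    rw [this]; exact hbV
  have hfV : ∀ r ∈ Set.Ioo 0 L, f r ∉ V := fun r hr =>
    hout _ (by linarith [hr.1]) (by linarith [hr.2])
  have hdL : dist (f 0) (f L) = L := by
    rw [hf 0 ⟨le_rfl, hLp.le⟩ L ⟨hLp.le, le_rfl⟩, zero_sub, abs_neg, abs_of_pos hLp]
  have hfg : IsGeodesicSegment f (f 0) (f L) := by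
    refine ⟨rfl, by rw [hdL], ?_⟩
    rw [hdL]; exact hf
  have hxI : x ∈ f '' Set.Ioo 0 L := by
    refine ⟨s - a, ⟨by linarith, by linarith⟩, ?_⟩
    simp only [f, add_sub_cancel]
    exact hxs
  have hopen : IsOpen (f '' Set.Ioo 0 L) := by
    rw [Metric.isOpen_iff]
    rintro _ ⟨r, hr, rfl⟩
    refine ⟨min r (L - r), lt_min hr.1 (by linarith [hr.2]), ?_⟩
    intro z hz
    rw [Metric.mem_ball, lt_min_iff] at hz
    obtain ⟨m, m1, m2, m3⟩ := exists_median hX z (f 0) (f L)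
    have em := geod_unique hX hfg m2
    have dr := geod_dist hfg (s := r) (by rw [hdL]; exact ⟨hr.1.le, hr.2.le⟩)
    have t1 := dist_triangle (f 0) z (f r)
    have t2 := dist_triangle z (f r) (f L)
    have t3 := dist_triangle z (f r) (f 0)
    have t4 := dist_triangle (f r) z (f L)
    rw [dist_comm (f r) z] at t4
    rw [dist_comm (f r) (f 0)] at t3
    rw [dist_comm (f 0) z] at t1
    rw [dist_comm (f 0) m, hdL] at m2
    rw [dist_comm (f 0) m] at em
    rw [hdL] at dr
    have hmI : dist m (f 0) ∈ Set.Ioo 0 L := ⟨by linarith, by linarith⟩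
    by_cases hzm : z = m
    · exact ⟨_, hmI, by rw [em, hzm]⟩
    · exfalso
      have hmV := hfV _ hmI
      rw [em] at hmV
      apply hmV
      apply hV
      refine ⟨z, f 0, f L, hzm, ?_, ?_, ?_, ?_, ?_⟩
      · intro e; rw [← e, dist_self] at hmI; exact lt_irrefl _ hmI.1
      · intro e; rw [← e, dist_comm, hdL] at hmI; exact lt_irrefl _ hmI.2
      · unfold gpr; rw [dist_comm m z]; linarith
      · unfold gpr; linarith
      · unfold gpr; rw [dist_comm m z]; linarith
  have hcl : IsClosed (f '' Set.Icc 0 L) :=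
    (isCompact_Icc.image_of_continuousOn (geod_cont hf)).isClosed
  refine ⟨L, hLp, f, hf, ?_, f0V, fLV⟩
  have hxV : x ∈ Vᶜ := hx
  apply Set.Subset.antisymm
  · apply IsPreconnected.subset_connectedComponentIn _ hxI
    · rintro _ ⟨r, hr, rfl⟩; exact hfV r hr
    · exact isPreconnected_Ioo.image _ ((geod_cont hf).mono Set.Ioo_subset_Icc_self)
  · apply IsPreconnected.subset_left_of_subset_union hopen hcl.isOpen_compl
    · rw [Set.disjoint_compl_right_iff_subset]
      exact Set.image_mono Set.Ioo_subset_Icc_self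
    · intro z hz
      have hzV := connectedComponentIn_subset _ _ hz
      by_cases hzI : z ∈ f '' Set.Icc 0 L
      · left
        obtain ⟨r, hr, rfl⟩ := hzI
        refine ⟨r, ⟨lt_of_le_of_ne hr.1 ?_, lt_of_le_of_ne hr.2 ?_⟩, rfl⟩
        · rintro rfl; exact hzV f0V
        · rintro rfl; exact hzV fLV
      · right; exact hzI
    · exact ⟨x, mem_connectedComponentIn hxV, hxI⟩
    · exact isPreconnected_connectedComponentIn

end Act

/-- A minimal irreducible isometric action of a finitely generated group
on an `ℝ`-tree with integer translation lengths forces the tree to be simplicial. -/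
theorem simplicial_of_integer_lengths {G : Type*} [Group G] (hG : Group.FG G)
    {X : Type*} [MetricSpace X] [Nonempty X] (hX : IsRTree X)
    (σ : G →* (X ≃ᵢ X))
    (hmin : ∀ S : Set X, IsConnected S → (∀ g : G, σ g '' S = S) → S = Set.univ)
    (hirr : ∃ a b : G, IsHyperbolicIsom (σ a) ∧ IsHyperbolicIsom (σ b) ∧
      Disjoint (isomCore (σ a)) (isomCore (σ b)))
    (hint : ∀ g : G, ∃ k : ℤ, translationLength (σ g) = (k : ℝ)) :
    IsMetricSimplicialTree X := by
  have H := hyp0_of_tree hX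
  have hsep := branch_dist hX σ hmin hirr hint
  refine ⟨hX, {p | IsBranch p}, ?_, ?_, ?_⟩
  · apply isClosed_of_pairwise_le_dist (ε := 1 / 2) (by norm_num)
    intro p hp q hq hpq
    exact hsep p q hp hq hpq
  · intro v hv
    refine ⟨1 / 2, by norm_num, ?_⟩
    intro w hw hlt
    by_contra hne
    exact absurd (hsep v w hv hw (Ne.symm hne)) (not_le.2 hlt)
  · intro x hx
    obtain ⟨b, hb⟩ := exists_branch hX σ hirr
    obtain ⟨u, v, hu, hv, huv⟩ := two_dirs hX σ hmin b hb x
    obtain ⟨g, hg⟩ := dir_orbit hX σ hmin b x u hu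
    obtain ⟨h, hh⟩ := dir_orbit hX σ hmin b x v hv
    have h1 : gpr x (σ g b) v = 0 := gpr_zero_trans H huv (by rw [gpr_comm]; exact hg)
    have h2 : gpr x (σ h b) (σ g b) = 0 :=
      gpr_zero_trans H (x := v) (by rw [gpr_comm]; exact h1) (by rw [gpr_comm]; exact hh)
    apply final_edge hX _ _ (fun p hp => hp) x (σ g b) (σ h b) hx (hb.smul _) (hb.smul _)
    · unfold gpr at h2
      rw [dist_comm (σ g b) x, dist_comm (σ g b) (σ h b)]
      linarith
    · apply isClosed_of_pairwise_le_dist (ε := 1 / 2) (by norm_num)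
      intro p hp q hq hpq
      exact hsep p q hp hq hpq
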